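/- For the unique-connection torsion absorption computation on V_4: if P_2 ∈ V_2 and one defines δP by requiring ⟨⟨P_2,ω⟩_2, ω⟩_1 = ⟨a_2 P_2, ⟨ω,ω⟩_3⟩_0 + ⟨b_2 P_2, ⟨ω,ω⟩_1⟩_2 identically in the V_4-valued 1-form ω, then necessarily a_2 = 3/10 and b_2 = 1/5. -/

import Mathlib

open MvPolynomial

noncomputable section

abbrev P := MvPolynomial (Fin 2) ℝ

/-- partial derivative, as a plain function -/
def pd (i : Fin 2) (u : P) : P := MvPolynomial.pderiv i u

/-- The Clebsch-Gordan pairing of binary forms. -/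
def CG (p : ℕ) (u v : P) : P :=
  ((p.factorial : ℝ)⁻¹) •
    ∑ k ∈ Finset.range (p + 1),
      (((-1 : ℝ) ^ k * (p.choose k : ℝ)) •
        ((pd 0)^[p - k] ((pd 1)^[k] u) * (pd 0)^[k] ((pd 1)^[p - k] v)))

lemma CG_zero (u v : P) : CG 0 u v = u * v := by
  simp [CG]

lemma CG_one (u v : P) :
    CG 1 u v = pderiv 0 u * pderiv 1 v - pderiv 1 u * pderiv 0 v := by
  simp [CG, pd, Finset.sum_range_succ, sub_eq_add_neg]

lemma CG_two (u v : P) :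
    CG 2 u v = (1 / 2 : ℝ) • (pderiv 0 (pderiv 0 u) * pderiv 1 (pderiv 1 v)
      - (2 : ℝ) • (pderiv 0 (pderiv 1 u) * pderiv 0 (pderiv 1 v))
      + pderiv 1 (pderiv 1 u) * pderiv 0 (pderiv 0 v)) := by
  simp [CG, pd, Finset.sum_range_succ, sub_eq_add_neg, Nat.factorial]

lemma CG_three (u v : P) :
    CG 3 u v = (1 / 6 : ℝ) • (pderiv 0 (pderiv 0 (pderiv 0 u)) * pderiv 1 (pderiv 1 (pderiv 1 v))
      - (3 : ℝ) • (pderiv 0 (pderiv 0 (pderiv 1 u)) * pderiv 0 (pderiv 1 (pderiv 1 v)))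
      + (3 : ℝ) • (pderiv 0 (pderiv 1 (pderiv 1 u)) * pderiv 0 (pderiv 0 (pderiv 1 v)))
      - pderiv 1 (pderiv 1 (pderiv 1 u)) * pderiv 0 (pderiv 0 (pderiv 0 v))) := by
  simp [CG, pd, Finset.sum_range_succ, sub_eq_add_neg, Nat.factorial, Nat.choose,
    show (-1 : ℝ) ^ 3 = -1 by norm_num]

/-- if the identity
⟨⟨P₂,ω⟩₂,ω⟩₁ = ⟨a P₂,⟨ω,ω⟩₃⟩₀ + ⟨b P₂,⟨ω,ω⟩₁⟩₂
holds identically for a V₄-valued 1-form ω (stated here in polarized form on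
components u, v ∈ V₄), then necessarily a = 3/10 and b = 1/5. -/
theorem skewing_constants_a2_b2 (a b : ℝ)
    (h : ∀ P2 u v : P, P2.IsHomogeneous 2 → u.IsHomogeneous 4 → v.IsHomogeneous 4 →
      CG 1 (CG 2 P2 u) v - CG 1 (CG 2 P2 v) u
        = a • CG 0 P2 (CG 3 u v - CG 3 v u) + b • CG 2 P2 (CG 1 u v - CG 1 v u)) :
    a = 3 / 10 ∧ b = 1 / 5 := by
  have hX : ∀ (i : Fin 2) (n : ℕ), ((X i : P) ^ n).IsHomogeneous n := fun i n => by
    simpa using (isHomogeneous_X ℝ i).pow n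
  have h13 : ((X 0 : P) * X 1 ^ 3).IsHomogeneous 4 := by
    simpa using (isHomogeneous_X ℝ (0 : Fin 2)).mul (hX 1 3)
  have h1 := congrArg (eval (fun _ => (1 : ℝ))) (h (X 0 ^ 2) (X 1 ^ 4) (X 0 * X 1 ^ 3) (hX 0 2) (hX 1 4) h13)
  have h2 := congrArg (eval (fun _ => (1 : ℝ))) (h (X 0 ^ 2) (X 0 * X 1 ^ 3) (X 0 ^ 4) (hX 0 2) h13 (hX 0 4))
  have d01 : pderiv (0 : Fin 2) (X 1 : P) = 0 := pderiv_X_of_ne (by decide)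
  have d10 : pderiv (1 : Fin 2) (X 0 : P) = 0 := pderiv_X_of_ne (by decide)
  have n2 (i : Fin 2) : pderiv i (2 : P) = 0 := by
    rw [← map_ofNat (C (R := ℝ) (σ := Fin 2)) 2]; exact pderiv_C
  have n3 (i : Fin 2) : pderiv i (3 : P) = 0 := by
    rw [← map_ofNat (C (R := ℝ) (σ := Fin 2)) 3]; exact pderiv_C
  have n4 (i : Fin 2) : pderiv i (4 : P) = 0 := by
    rw [← map_ofNat (C (R := ℝ) (σ := Fin 2)) 4]; exact pderiv_C
  simp only [CG_zero, CG_one, CG_two, CG_three] at h1 h2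
  simp [Derivation.leibniz, Derivation.leibniz_pow, d01, d10, n2, n3, n4, smul_eval] at h1 h2
  norm_num at h1 h2
  constructor <;> linarith
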